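/- There exists a constant c ∈ (0, 1) such that for every sufficiently large integer n one can find positive integers d₁ < d₂, both dividing n!, satisfying (1 − 1/n^c) · √(n!) < d₁ < √(n!) < d₂ < (1 + 2/n^c) · √(n!); consequently, for all sufficiently large n, (1 − 1/n^c) · √(n!) < ρ₁(n!) < √(n!) < ρ₂(n!) < (1 + 2/n^c) · √(n!). -/

import Mathlib

/-!
The middle divisors come from a factorization `n ! = a * b` with `1 ≤ b / a ≤ 1 + 2 / n`. Such a
factorization is carried from `n` to `n + 2` by giving the larger new factor `n + 2` to `a` and
`n + 1` to `b`: the ratio is multiplied by `(n + 1) / (n + 2)`, so it is at most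
`(n + 1) / n ≤ 1 + 2 / (n + 2)` for `2 ≤ n`, and if it drops below `1` its inverse is at most
`(n + 2) / (n + 1)`. Since `1 + 2 / n < (1 + 1 / n) ^ 2`, both factors are within a relative
distance `1 / n` of `√(n !)`. They differ from `√(n !)` because `n !` is not a square: by Bertrand's
postulate some prime divides it exactly once.
-/

open Finset Nat Filter

/-- `ρ₁ m`: the largest divisor of `m` not exceeding `√m`. -/
noncomputable def rho₁ (m : ℕ) : ℕ := sSup {d : ℕ | d ∣ m ∧ (d : ℝ) ≤ Real.sqrt m}

/-- `ρ₂ m`: the smallest divisor of `m` at least `√m`. -/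
noncomputable def rho₂ (m : ℕ) : ℕ := sInf {d : ℕ | d ∣ m ∧ Real.sqrt m ≤ (d : ℝ)}

theorem rho₁_mem (m : ℕ) : rho₁ m ∈ {d : ℕ | d ∣ m ∧ (d : ℝ) ≤ √m} := by
  have hne : {d : ℕ | d ∣ m ∧ (d : ℝ) ≤ √m}.Nonempty := by
    rcases m.eq_zero_or_pos with rfl | hm
    · exact ⟨0, by simp⟩
    · exact ⟨1, one_dvd m, by simpa using Nat.one_le_iff_ne_zero.2 hm.ne'⟩
  exact Nat.sSup_mem hne ⟨⌊√m⌋₊, fun _ hd ↦ Nat.le_floor hd.2⟩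

theorem le_rho₁ {m d : ℕ} (hdvd : d ∣ m) (hle : (d : ℝ) ≤ √m) : d ≤ rho₁ m :=
  le_csSup ⟨⌊√m⌋₊, fun _ hd ↦ Nat.le_floor hd.2⟩ ⟨hdvd, hle⟩

theorem rho₂_mem (m : ℕ) : rho₂ m ∈ {d : ℕ | d ∣ m ∧ √m ≤ (d : ℝ)} := by
  have hm : √m ≤ (m : ℝ) :=
    Real.sqrt_le_iff.2 ⟨m.cast_nonneg, mod_cast Nat.le_self_pow two_ne_zero m⟩
  exact Nat.sInf_mem ⟨m, dvd_rfl, hm⟩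

theorem rho₂_le {m d : ℕ} (hdvd : d ∣ m) (hle : √m ≤ (d : ℝ)) : rho₂ m ≤ d :=
  Nat.sInf_le ⟨hdvd, hle⟩

theorem rho₁_lt_sqrt {m : ℕ} (hm : ¬IsSquare m) : (rho₁ m : ℝ) < √m :=
  (rho₁_mem m).2.lt_of_ne ((irrational_sqrt_natCast_iff.2 hm).ne_nat _).symm

theorem sqrt_lt_rho₂ {m : ℕ} (hm : ¬IsSquare m) : √m < (rho₂ m : ℝ) :=
  (rho₂_mem m).2.lt_of_ne ((irrational_sqrt_natCast_iff.2 hm).ne_nat _)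

theorem padicValNat_factorial_eq_one {p n : ℕ} [Fact p.Prime] (hpn : p ≤ n) (hnp : n < 2 * p) :
    padicValNat p (n !) = 1 := by
  obtain ⟨k, rfl⟩ := Nat.exists_eq_add_of_le hpn
  calc padicValNat p ((p + k) !)
    _ = padicValNat p ((p * 1 + k) !) := by rw [mul_one]
    _ = padicValNat p ((p * 1) !) := padicValNat_factorial_mul_add 1 (by lia)
    _ = 1 := by rw [padicValNat_factorial_mul, Nat.factorial_one, padicValNat_one_right]

theorem not_isSquare_factorial {n : ℕ} (hn : 2 ≤ n) : ¬IsSquare (n !) := by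
  rintro ⟨a, ha⟩
  obtain ⟨p, hp, hlt, hle⟩ := Nat.exists_prime_lt_and_le_two_mul (n / 2) (by lia)
  have : Fact p.Prime := ⟨hp⟩
  have hval : padicValNat p (n !) = 1 := padicValNat_factorial_eq_one (by lia) (by lia)
  have ha₀ : a ≠ 0 := by
    rintro rfl
    exact n.factorial_ne_zero ha
  rw [ha, padicValNat.mul ha₀ ha₀] at hval
  lia

theorem exists_mul_eq_factorial_and_mul_le :
    ∀ n : ℕ, ∃ a b : ℕ, a * b = n ! ∧ a ≤ b ∧ n * b ≤ (n + 2) * a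
  | 0 => ⟨1, 1, by decide⟩
  | 1 => ⟨1, 1, by decide⟩
  | 2 => ⟨1, 2, by decide⟩
  | 3 => ⟨2, 3, by decide⟩
  | k + 4 => by
    obtain ⟨a, b, hab, hle, hratio⟩ := exists_mul_eq_factorial_and_mul_le (k + 2)
    have hfact : ((k + 4) * a) * ((k + 3) * b) = (k + 4) ! := by
      rw [Nat.factorial_succ, Nat.factorial_succ, ← hab]
      ring
    rcases le_total ((k + 4) * a) ((k + 3) * b) with h | h
    · refine ⟨_, _, hfact, h, ?_⟩
      calc (k + 4) * ((k + 3) * b)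
        _ ≤ (k + 6) * ((k + 2) * b) := by nlinarith
        _ ≤ (k + 6) * ((k + 4) * a) := by gcongr
    · refine ⟨_, _, (mul_comm _ _).trans hfact, h, ?_⟩
      calc (k + 4) * ((k + 4) * a)
        _ ≤ (k + 6) * ((k + 3) * a) := by nlinarith
        _ ≤ (k + 6) * ((k + 3) * b) := by gcongr

theorem one_sub_mul_sqrt_lt {a b t : ℝ} (ha : 0 < a) (ht : 0 < t) (h : b ≤ (1 + 2 * t) * a) :
    (1 - t) * √(a * b) < a := by
  have hsqrt : √(a * b) ≤ (1 + t) * a := by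
    refine Real.sqrt_le_iff.2 ⟨by positivity, ?_⟩
    calc a * b ≤ a * ((1 + 2 * t) * a) := by gcongr
      _ ≤ ((1 + t) * a) ^ 2 := by nlinarith [sq_nonneg (t * a)]
  rcases le_total t 1 with ht₁ | ht₁
  · calc (1 - t) * √(a * b) ≤ (1 - t) * ((1 + t) * a) :=
        mul_le_mul_of_nonneg_left hsqrt (sub_nonneg.2 ht₁)
      _ < a := by nlinarith [mul_pos (pow_pos ht 2) ha]
  · exact (mul_nonpos_of_nonpos_of_nonneg (sub_nonpos.2 ht₁) (Real.sqrt_nonneg _)).trans_lt ha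

theorem lt_one_add_mul_sqrt {a b t : ℝ} (hb : 0 < b) (ht : 0 < t) (h : b ≤ (1 + 2 * t) * a) :
    b < (1 + t) * √(a * b) := by
  have ha : 0 < a := pos_of_mul_pos_right (hb.trans_le h) (by positivity)
  rw [← div_lt_iff₀' (by positivity), Real.lt_sqrt (by positivity), div_pow,
    div_lt_iff₀ (by positivity)]
  calc b ^ 2 = b * b := sq b
    _ ≤ (1 + 2 * t) * a * b := by gcongr
    _ < a * b * (1 + t) ^ 2 := by nlinarith [mul_pos (mul_pos ha hb) (pow_pos ht 2)]

theorem exists_mul_eq_factorial_le_one_add_mul {n : ℕ} (hn : 0 < n) {ε : ℝ}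
    (hε : 1 / (n : ℝ) ≤ ε) :
    ∃ a b : ℕ, 0 < a ∧ a * b = n ! ∧ a ≤ b ∧ (b : ℝ) ≤ (1 + 2 * ε) * a := by
  obtain ⟨a, b, hab, hle, hratio⟩ := exists_mul_eq_factorial_and_mul_le n
  have ha : 0 < a := Nat.pos_of_dvd_of_pos ⟨b, hab.symm⟩ n.factorial_pos
  have hn' : (0 : ℝ) < n := mod_cast hn
  have hratio' : (n : ℝ) * b ≤ (n + 2) * a := mod_cast hratio
  refine ⟨a, b, ha, hab, hle, ?_⟩
  calc (b : ℝ) ≤ (n + 2) * a / n := (le_div_iff₀' hn').2 hratio'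
    _ = (1 + 2 * (1 / n)) * a := by field_simp
    _ ≤ (1 + 2 * ε) * a := by gcongr

theorem one_sub_mul_sqrt_factorial_lt_rho₁ {n : ℕ} (hn : 0 < n) {ε : ℝ} (hε : 1 / (n : ℝ) ≤ ε) :
    (1 - ε) * √(n !) < rho₁ (n !) := by
  obtain ⟨a, b, ha, hab, hle, hratio⟩ := exists_mul_eq_factorial_le_one_add_mul hn hε
  have hε₀ : 0 < ε := (by positivity : 0 < 1 / (n : ℝ)).trans_le hε
  have ha_sq : a ^ 2 ≤ n ! := by
    rw [← hab, sq]
    gcongr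
  have ha_le : (a : ℝ) ≤ √(n !) := Real.le_sqrt_of_sq_le (mod_cast ha_sq)
  calc (1 - ε) * √(n !) = (1 - ε) * √(a * b) := by rw [← hab, Nat.cast_mul]
    _ < a := one_sub_mul_sqrt_lt (mod_cast ha) hε₀ hratio
    _ ≤ rho₁ (n !) := mod_cast le_rho₁ ⟨b, hab.symm⟩ ha_le

theorem rho₂_lt_one_add_mul_sqrt_factorial {n : ℕ} (hn : 0 < n) {ε : ℝ} (hε : 1 / (n : ℝ) ≤ ε) :
    rho₂ (n !) < (1 + ε) * √(n !) := by
  obtain ⟨a, b, ha, hab, hle, hratio⟩ := exists_mul_eq_factorial_le_one_add_mul hn hε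
  have hε₀ : 0 < ε := (by positivity : 0 < 1 / (n : ℝ)).trans_le hε
  have hb_sq : n ! ≤ b ^ 2 := by
    rw [← hab, sq]
    gcongr
  have hb_ge : √(n !) ≤ b := Real.sqrt_le_iff.2 ⟨b.cast_nonneg, mod_cast hb_sq⟩
  calc (rho₂ (n !) : ℝ) ≤ b := mod_cast rho₂_le ⟨a, by rw [← hab, mul_comm]⟩ hb_ge
    _ < (1 + ε) * √(a * b) := lt_one_add_mul_sqrt (mod_cast ha.trans_le hle) hε₀ hratio
    _ = (1 + ε) * √(n !) := by rw [← hab, Nat.cast_mul]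

theorem middle_divisors_factorial_general {n : ℕ} (hn : 2 ≤ n) {ε δ : ℝ}
    (hε : 1 / (n : ℝ) ≤ ε) (hδ : 1 / (n : ℝ) ≤ δ) :
    (∃ d₁ d₂ : ℕ, 0 < d₁ ∧ d₁ < d₂ ∧ d₁ ∣ n ! ∧ d₂ ∣ n ! ∧
      (1 - ε) * √(n !) < d₁ ∧ d₁ < √(n !) ∧ √(n !) < d₂ ∧ d₂ < (1 + δ) * √(n !)) ∧
    ((1 - ε) * √(n !) < rho₁ (n !) ∧ rho₁ (n !) < √(n !) ∧
      √(n !) < rho₂ (n !) ∧ rho₂ (n !) < (1 + δ) * √(n !)) := by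
  have hn₀ : 0 < n := by lia
  have hsq : ¬IsSquare (n !) := not_isSquare_factorial hn
  have hlow : (1 - ε) * √(n !) < rho₁ (n !) := one_sub_mul_sqrt_factorial_lt_rho₁ hn₀ hε
  have hρ₁ : rho₁ (n !) < √(n !) := rho₁_lt_sqrt hsq
  have hρ₂ : √(n !) < rho₂ (n !) := sqrt_lt_rho₂ hsq
  have hupp : rho₂ (n !) < (1 + δ) * √(n !) := rho₂_lt_one_add_mul_sqrt_factorial hn₀ hδ
  have hdvd : rho₁ (n !) ∣ n ! := (rho₁_mem _).1
  refine ⟨⟨rho₁ (n !), rho₂ (n !), Nat.pos_of_dvd_of_pos hdvd n.factorial_pos, ?_, hdvd,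
    (rho₂_mem _).1, hlow, hρ₁, hρ₂, hupp⟩, hlow, hρ₁, hρ₂, hupp⟩
  exact_mod_cast hρ₁.trans hρ₂

theorem middle_divisors_factorial :
    ∃ c : ℝ, 0 < c ∧ c < 1 ∧ ∃ N : ℕ, ∀ n : ℕ, N ≤ n →
      (∃ d₁ d₂ : ℕ, 0 < d₁ ∧ d₁ < d₂ ∧ d₁ ∣ n ! ∧ d₂ ∣ n ! ∧
        (1 - 1 / (n : ℝ) ^ c) * Real.sqrt (n !) < (d₁ : ℝ) ∧
        (d₁ : ℝ) < Real.sqrt (n !) ∧ Real.sqrt (n !) < (d₂ : ℝ) ∧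
        (d₂ : ℝ) < (1 + 2 / (n : ℝ) ^ c) * Real.sqrt (n !)) ∧
      ((1 - 1 / (n : ℝ) ^ c) * Real.sqrt (n !) < (rho₁ (n !) : ℝ) ∧
        (rho₁ (n !) : ℝ) < Real.sqrt (n !) ∧ Real.sqrt (n !) < (rho₂ (n !) : ℝ) ∧
        (rho₂ (n !) : ℝ) < (1 + 2 / (n : ℝ) ^ c) * Real.sqrt (n !)) := by
  refine ⟨1 / 2, by norm_num, by norm_num, 2, fun n hn ↦ ?_⟩
  have hc : 1 / (n : ℝ) ≤ 1 / (n : ℝ) ^ (1 / 2 : ℝ) := by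
    gcongr
    exact Real.rpow_le_self_of_one_le (mod_cast (by lia : 1 ≤ n)) (by norm_num)
  exact middle_divisors_factorial_general hn hc (hc.trans (by gcongr; norm_num))
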